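/- Let K be a finite abelian group admitting a nondegenerate alternating bicharacter e : K × K → U(1). Then there exists a finite abelian group A such that K is isomorphic to A × A; in particular, the order of K is a perfect square. -/

import Mathlib

/-!
The proof splits off hyperbolic planes. Write `B` for `e♭`, so that `B l k = e k l`. Let `n` be the
exponent of `K` and `x` an element of order `n`. By nondegeneracy the character `B x` has order `n`,
and some value `ζ = B x y` has the same order. The values `B x k` and `B k y` are `n`-th roots of
unity, hence powers of `ζ`, as in the units of any domain. So every `k` can be corrected by powers
of `x` and `y` to lie in the orthogonal complement `P` of `{x, y}`. This gives
`K ≃* (⟨x⟩ × ⟨y⟩) × P` with `⟨x⟩` and `⟨y⟩` cyclic of order `n`. An element of `P` orthogonal to `P`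
is orthogonal to `x` and `y` as well, hence to all of `K`; so injectivity of `B` passes to its
restriction to `P` without any duality theory, and induction on the order applies.
-/

/-- An alternating bicharacter on an abelian group `K` (no topology): a map `K × K → U(1)`
which is a homomorphism in each variable separately and satisfies `e k k = 1`. -/
def IsAltBicharacter {K : Type*} [CommGroup K] (e : K → K → Circle) : Prop :=
  (∀ k l l' : K, e k (l * l') = e k l * e k l') ∧
  (∀ k k' l : K, e (k * k') l = e k l * e k' l) ∧
  ∀ k : K, e k k = 1

/-- Nondegeneracy for a discrete group: the map `e♭ : K → Hom(K, U(1))`, `(e♭ l) k = e k l`,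
is a group isomorphism. -/
def IsNondegenerate {K : Type*} [CommGroup K] (e : K → K → Circle) : Prop :=
  ∃ F : K ≃* (K →* Circle), ∀ k l : K, F l k = e k l

theorem exists_orderOf_apply_eq_orderOf {G C : Type*} [Group G] [Finite G] [CommGroup C]
    (f : G →* C) : ∃ g, orderOf (f g) = orderOf f := by
  have : Finite f.range := Set.finite_range f
  obtain ⟨⟨_, g, rfl⟩, hg⟩ :=
    Monoid.exists_orderOf_eq_exponent (Monoid.ExponentExists.of_finite (G := f.range))
  refine ⟨g, orderOf_eq_orderOf_iff.2 fun m => ⟨fun hm => ?_, fun hm => DFunLike.congr_fun hm g⟩⟩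
  have hdvd : Monoid.exponent f.range ∣ m := by
    rwa [← hg, ← Subgroup.orderOf_coe, orderOf_dvd_iff_pow_eq_one]
  ext k
  exact congrArg Subtype.val (Monoid.exponent_dvd_iff_forall_pow_eq_one.1 hdvd (f.rangeRestrict k))

/-- Bicharacters on `K` with values in `C`, in curried form. Nondegeneracy of `B` is expressed as
`Function.Injective B`. -/
abbrev Bicharacter (K C : Type*) [CommGroup K] [CommGroup C] := K →* K →* C

namespace Bicharacter

variable {K C : Type*} [CommGroup K] [CommGroup C] {B : Bicharacter K C}

/-- Alternating bicharacters. -/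
def IsAlternating (B : Bicharacter K C) : Prop := ∀ k, B k k = 1

/-- The orthogonal complement of `{x, y}`. For alternating `B` it does not matter on which side
`x` and `y` are paired; the sides chosen here are those of `B x y`. -/
def perp (B : Bicharacter K C) (x y : K) : Subgroup K := (B x).ker ⊓ (B.flip y).ker

/-- The restriction of a bicharacter to a subgroup. -/
def restrict (B : Bicharacter K C) (H : Subgroup K) : Bicharacter H C :=
  (B.comp H.subtype).compl₂ H.subtype

/-- The pair `x`, `y` spans a hyperbolic plane: both are killed by `n` and `B x y` has exact
order `n`, so that both have order `n`. -/
structure IsHyperbolicPair (B : Bicharacter K C) (n : ℕ) (x y : K) : Prop where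
  left_pow : x ^ n = 1
  right_pow : y ^ n = 1
  isPrimitiveRoot : IsPrimitiveRoot (B x y) n

theorem mem_perp {x y k : K} : k ∈ B.perp x y ↔ B x k = 1 ∧ B k y = 1 := Iff.rfl

theorem injective_compr₂ {D : Type*} [CommGroup D] {g : C →* D} (hB : Function.Injective B)
    (hg : Function.Injective g) : Function.Injective (B.compr₂ g) :=
  fun _ _ h => hB ((MonoidHom.cancel_left hg).1 h)

namespace IsAlternating

theorem restrict (hB : B.IsAlternating) (H : Subgroup K) : (B.restrict H).IsAlternating :=
  fun h => hB h

theorem apply_mul_apply_swap (hB : B.IsAlternating) (k l : K) : B k l * B l k = 1 := by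
  simpa [hB k, hB l, mul_comm] using hB (k * l)

theorem apply_eq_one_comm (hB : B.IsAlternating) {k l : K} : B k l = 1 ↔ B l k = 1 := by
  rw [eq_inv_of_mul_eq_one_left (hB.apply_mul_apply_swap k l), inv_eq_one]

theorem apply_left_zpow_mul_zpow (hB : B.IsAlternating) (x y : K) (a b : ℤ) :
    B x (x ^ a * y ^ b) = B x y ^ b := by
  simp [hB x]

theorem apply_zpow_mul_zpow_right (hB : B.IsAlternating) (x y : K) (a b : ℤ) :
    B (x ^ a * y ^ b) y = B x y ^ a := by
  simp [hB y]

end IsAlternating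

theorem exists_isHyperbolicPair [Finite K] (hinj : Function.Injective B) :
    ∃ x y, B.IsHyperbolicPair (Monoid.exponent K) x y := by
  obtain ⟨x, hx⟩ := Monoid.exists_orderOf_eq_exponent (Monoid.ExponentExists.of_finite (G := K))
  obtain ⟨y, hy⟩ := exists_orderOf_apply_eq_orderOf (B x)
  refine ⟨x, y, Monoid.pow_exponent_eq_one x, Monoid.pow_exponent_eq_one y, ?_⟩
  rw [IsPrimitiveRoot.iff_orderOf, hy, orderOf_injective B hinj, hx]

namespace IsHyperbolicPair

variable {n : ℕ} {x y : K}

theorem orderOf_left (h : B.IsHyperbolicPair n x y) : orderOf x = n :=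
  (orderOf_dvd_of_pow_eq_one h.left_pow).antisymm <| h.isPrimitiveRoot.dvd_of_pow_eq_one _ <| by
    rw [← MonoidHom.pow_apply, ← map_pow, pow_orderOf_eq_one, map_one, MonoidHom.one_apply]

theorem orderOf_right (h : B.IsHyperbolicPair n x y) : orderOf y = n :=
  (orderOf_dvd_of_pow_eq_one h.right_pow).antisymm <| h.isPrimitiveRoot.dvd_of_pow_eq_one _ <| by
    rw [← map_pow, pow_orderOf_eq_one, map_one]

theorem left_notMem_perp (h : B.IsHyperbolicPair n x y) (hn : n ≠ 1) : x ∉ B.perp x y :=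
  fun hx => hn (h.isPrimitiveRoot.unique ((mem_perp.1 hx).2 ▸ IsPrimitiveRoot.one))

theorem eq_one_of_mul_eq_one (h : B.IsHyperbolicPair n x y) (hB : B.IsAlternating) {a b : ℤ}
    {p : K} (hp : p ∈ B.perp x y) (hmul : x ^ a * y ^ b * p = 1) :
    x ^ a = 1 ∧ y ^ b = 1 ∧ p = 1 := by
  obtain ⟨hxp, hpy⟩ := mem_perp.1 hp
  have ha : B x y ^ a = 1 := calc
    B x y ^ a = B (x ^ a * y ^ b * p) y := by
      rw [map_mul B, MonoidHom.mul_apply, hB.apply_zpow_mul_zpow_right, hpy, mul_one]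
    _ = 1 := by rw [hmul, map_one, MonoidHom.one_apply]
  have hb : B x y ^ b = 1 := calc
    B x y ^ b = B x (x ^ a * y ^ b * p) := by
      rw [map_mul (B x), hB.apply_left_zpow_mul_zpow, hxp, mul_one]
    _ = 1 := by rw [hmul, map_one]
  rw [h.isPrimitiveRoot.zpow_eq_one_iff_dvd] at ha hb
  have hxa : x ^ a = 1 := by rwa [← orderOf_dvd_iff_zpow_eq_one, h.orderOf_left]
  have hyb : y ^ b = 1 := by rwa [← orderOf_dvd_iff_zpow_eq_one, h.orderOf_right]
  exact ⟨hxa, hyb, by simpa [hxa, hyb] using hmul⟩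

section Domain

variable {R : Type*} [CommRing R] [IsDomain R] {B : Bicharacter K Rˣ} [NeZero n]

theorem exists_zpow_mul_zpow_mul (h : B.IsHyperbolicPair n x y) (hB : B.IsAlternating) (k : K) :
    ∃ a b : ℤ, ∃ p ∈ B.perp x y, x ^ a * y ^ b * p = k := by
  have mem_zpowers {z : Rˣ} (hz : z ^ n = 1) : z ∈ Subgroup.zpowers (B x y) := by
    rwa [h.isPrimitiveRoot.zpowers_eq, mem_rootsOfUnity]
  obtain ⟨a, ha : B x y ^ a = B k y⟩ := mem_zpowers (z := B k y) (by
    rw [← map_pow, h.right_pow, map_one])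
  obtain ⟨b, hb : B x y ^ b = B x k⟩ := mem_zpowers (z := B x k) (by
    rw [← MonoidHom.pow_apply, ← map_pow, h.left_pow, map_one, MonoidHom.one_apply])
  refine ⟨a, b, (x ^ a * y ^ b)⁻¹ * k, mem_perp.2 ⟨?_, ?_⟩, mul_inv_cancel_left _ _⟩
  · rw [map_mul, map_inv, hB.apply_left_zpow_mul_zpow, hb, inv_mul_cancel]
  · rw [map_mul, map_inv, MonoidHom.mul_apply, MonoidHom.inv_apply, hB.apply_zpow_mul_zpow_right,
      ha, inv_mul_cancel]

theorem nonempty_mulEquiv_zpowers_prod_perp (h : B.IsHyperbolicPair n x y)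
    (hB : B.IsAlternating) :
    Nonempty (K ≃* (Subgroup.zpowers x × Subgroup.zpowers y) × B.perp x y) := by
  let f : (Subgroup.zpowers x × Subgroup.zpowers y) × B.perp x y →* K :=
    ((Subgroup.zpowers x).subtype.coprod (Subgroup.zpowers y).subtype).coprod
      (B.perp x y).subtype
  have hf_inj : Function.Injective f := (injective_iff_map_eq_one f).2 <| by
    rintro ⟨⟨⟨_, a, rfl⟩, ⟨_, b, rfl⟩⟩, p, hp⟩ hmul
    obtain ⟨hxa, hyb, hp1⟩ := h.eq_one_of_mul_eq_one hB hp hmul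
    ext <;> assumption
  have hf_surj : Function.Surjective f := fun k => by
    obtain ⟨a, b, p, hp, rfl⟩ := h.exists_zpow_mul_zpow_mul hB k
    exact ⟨((⟨x ^ a, a, rfl⟩, ⟨y ^ b, b, rfl⟩), ⟨p, hp⟩), rfl⟩
  exact ⟨(MulEquiv.ofBijective f ⟨hf_inj, hf_surj⟩).symm⟩

theorem injective_restrict_perp (h : B.IsHyperbolicPair n x y) (hB : B.IsAlternating)
    (hinj : Function.Injective B) : Function.Injective (B.restrict (B.perp x y)) := by
  refine (injective_iff_map_eq_one _).2 fun p hp => ?_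
  obtain ⟨hxp, hpy⟩ := mem_perp.1 p.2
  have hpx : B p x = 1 := hB.apply_eq_one_comm.1 hxp
  suffices B p = 1 from Subtype.ext ((map_eq_one_iff B hinj).1 this)
  ext1 k
  obtain ⟨a, b, q, hq, rfl⟩ := h.exists_zpow_mul_zpow_mul hB k
  have hpq : B p q = 1 := DFunLike.congr_fun hp ⟨q, hq⟩
  simp [hpx, hpy, hpq]

end Domain

end IsHyperbolicPair

theorem exists_mulEquiv_prod_self {K R : Type*} [CommGroup K] [Finite K] [CommRing R] [IsDomain R]
    {B : Bicharacter K Rˣ} (hB : B.IsAlternating) (hinj : Function.Injective B) :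
    ∃ (A : Type) (_ : CommGroup A), Finite A ∧ Nonempty (K ≃* A × A) := by
  induction hcard : Nat.card K using Nat.strong_induction_on generalizing K with
  | _ m ih =>
  rcases subsingleton_or_nontrivial K with _ | _
  · have : Unique K := uniqueOfSubsingleton 1
    exact ⟨Unit, inferInstance, inferInstance, ⟨MulEquiv.ofUnique.trans MulEquiv.prodUnique.symm⟩⟩
  obtain ⟨x, y, h⟩ := exists_isHyperbolicPair hinj
  set n := Monoid.exponent K
  have hn : n ≠ 1 := fun hn => not_subsingleton K (Monoid.exp_eq_one_iff.1 hn)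
  have hlt : Nat.card (B.perp x y) < m := hcard ▸ Finite.card_subtype_lt (h.left_notMem_perp hn)
  obtain ⟨A, _, _, ⟨φ⟩⟩ :=
    ih _ hlt (hB.restrict (B.perp x y)) (h.injective_restrict_perp hB hinj) rfl
  obtain ⟨ψ⟩ := h.nonempty_mulEquiv_zpowers_prod_perp hB
  have card_zmod : Nat.card (Multiplicative (ZMod n)) = n := Nat.card_zmod n
  let σ : Subgroup.zpowers x ≃* Multiplicative (ZMod n) :=
    mulEquivOfCyclicCardEq (by rw [Nat.card_zpowers, h.orderOf_left, card_zmod])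
  let τ : Subgroup.zpowers y ≃* Multiplicative (ZMod n) :=
    mulEquivOfCyclicCardEq (by rw [Nat.card_zpowers, h.orderOf_right, card_zmod])
  exact ⟨Multiplicative (ZMod n) × A, inferInstance, inferInstance,
    ⟨ψ.trans (((σ.prodCongr τ).prodCongr φ).trans (MulEquiv.prodProdProdComm _ _ _ _))⟩⟩

end Bicharacter

theorem finite_heisenberg_phase_space_is_square_general {K R : Type*} [CommGroup K] [Finite K]
    [CommRing R] [IsDomain R] (B : Bicharacter K Rˣ) (hB : B.IsAlternating)
    (hinj : Function.Injective B) :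
    ∃ (A : Type) (_ : CommGroup A), Finite A ∧ Nonempty (K ≃* A × A) ∧
      ∃ m : ℕ, Nat.card K = m * m := by
  obtain ⟨A, _, _, ⟨φ⟩⟩ := Bicharacter.exists_mulEquiv_prod_self hB hinj
  exact ⟨A, inferInstance, inferInstance, ⟨φ⟩, Nat.card A,
    (Nat.card_congr φ.toEquiv).trans (Nat.card_prod A A)⟩

/-- A finite abelian group admitting a nondegenerate alternating bicharacter is of the form
`A × A`; in particular its order is a perfect square. -/
theorem finite_heisenberg_phase_space_is_square
    {K : Type*} [CommGroup K] [Finite K]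
    (e : K → K → Circle) (he : IsAltBicharacter e) (hnd : IsNondegenerate e) :
    ∃ (A : Type) (_iA : CommGroup A), Finite A ∧ Nonempty (K ≃* A × A) ∧
      ∃ m : ℕ, Nat.card K = m * m := by
  obtain ⟨F, hF⟩ := hnd
  exact finite_heisenberg_phase_space_is_square_general (F.toMonoidHom.compr₂ Circle.toUnits)
    (fun k => by simp [hF, he.2.2])
    (Bicharacter.injective_compr₂ F.injective unitSphereToUnits_injective)
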